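/- Let G = N_{3,4}, let f : H → G be a homomorphism from a finite-index subgroup H of G, let m, n, k, j be positive integers with aᵐ, bⁿ, cᵏ, dʲ ∈ H, let K = ⟨aᵐ, bⁿ, cᵏ, dʲ⟩, and let N_f be the associated 4×4 integer exponent matrix. If det(N_f) = 0, then there exists a nontrivial subgroup W of K that is normal in G and contained in the kernel of f. -/

import Mathlib

/-- The commutator `[x, y] = x⁻¹ y⁻¹ x y`. -/
def cmt {G : Type*} [Group G] (x y : G) : G := x⁻¹ * y⁻¹ * x * y

/-- The defining relators of the Bludov–Gusev group `N_{3,4}` on generators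
`a, b, c, d` (indexed by `0, 1, 2, 3`). -/
def N34Rels : Set (FreeGroup (Fin 4)) :=
  let a : FreeGroup (Fin 4) := FreeGroup.of 0
  let b : FreeGroup (Fin 4) := FreeGroup.of 1
  let c : FreeGroup (Fin 4) := FreeGroup.of 2
  let d : FreeGroup (Fin 4) := FreeGroup.of 3
  {cmt a (cmt a b), cmt (cmt a b) b, cmt a (cmt c d), cmt (cmt a d) d,
   cmt b (cmt b c), cmt b (cmt c d), cmt c (cmt c d), cmt (cmt c d) d,
   cmt a (cmt b c) * cmt (cmt a c) b,
   cmt a (cmt b d) * cmt (cmt a d) b,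
   cmt a (cmt a d) * (cmt (cmt b c) c)⁻¹,
   cmt a (cmt a c) * (cmt b (cmt b d))⁻¹,
   cmt (cmt a c) b * (cmt (cmt b d) d)⁻¹,
   cmt (cmt a c) c * (cmt (cmt b d) c)⁻¹,
   cmt (cmt a d) b * (cmt (cmt a d) c)⁻¹,
   cmt a b * (cmt (cmt a c) c)⁻¹,
   cmt c d * (cmt a (cmt a c))⁻¹}

/-- The Bludov–Gusev group `N_{3,4}`, presented on generators `a, b, c, d`. -/
abbrev N34 : Type := PresentedGroup N34Rels

/-- The generator `a` of `N_{3,4}`. -/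
def ga : N34 := PresentedGroup.of 0
/-- The generator `b` of `N_{3,4}`. -/
def gb : N34 := PresentedGroup.of 1
/-- The generator `c` of `N_{3,4}`. -/
def gc : N34 := PresentedGroup.of 2
/-- The generator `d` of `N_{3,4}`. -/
def gd : N34 := PresentedGroup.of 3

/-!
If `det Nf = 0`, some nonzero integer vector `e` satisfies `e Nf = 0`, so `f` maps
`x = a^(m e₀) b^(n e₁) c^(k e₂) d^(j e₃)` into the commutator subgroup. Since `N_{3,4}` has class
three, `[[x, g], g]` is central for every `g`, and for `g ∈ H` it lies in the kernel of `f`, its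
image being the triple commutator `[[f x, f g], f g]` of an element `f x` of the commutator
subgroup. Moreover
`[[x, c], c] = [a, b]^(m e₀) [a, [a, d]]^(n e₁)` and
`[[x, a], a] = [c, d]^(k e₂) [a, [a, d]]^(j e₃)`. Three representations by unipotent integer
matrices show that `[a, b]`, `[c, d]` and `[a, [a, d]]` are independent, so `[[x, g], g]` is
nontrivial for `g = c ^ k` or for `g = a ^ m`, and it generates `W`.

That the class is three is extracted from the relations by comparing `(x ^ g) ^ h` with
`((x ^ h) ^ g) ^ [g, h]`, and by conjugating pairs of commuting elements with generators.
-/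

section Conjugation

variable {G : Type*} [Group G]

/-- Right conjugation `x ↦ x^g = g⁻¹ x g`, the convention under which `x^g = x [x, g]` for the
commutator `cmt`. -/
def rconj (g : G) : G →* G := (MulAut.conj g⁻¹).toMonoidHom

theorem rconj_apply (g x : G) : rconj g x = g⁻¹ * x * g := by
  simp [rconj]

theorem rconj_injective (g : G) : Function.Injective (rconj g) :=
  (MulAut.conj g⁻¹).injective

theorem rconj_mul_left (g h x : G) : rconj (g * h) x = rconj h (rconj g x) := by
  simp [rconj_apply, mul_assoc]

theorem rconj_comm {g h : G} (hgh : Commute g h) (x : G) :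
    rconj g (rconj h x) = rconj h (rconj g x) := by
  rw [← rconj_mul_left, ← rconj_mul_left, hgh.eq]

theorem mul_rconj (g x : G) : g * rconj g x = x * g := by
  simp [rconj_apply, mul_assoc]

theorem rconj_eq_mul_cmt (g x : G) : rconj g x = x * cmt x g := by
  simp [rconj_apply, cmt, mul_assoc]

theorem rconj_eq_self_iff {g x : G} : rconj g x = x ↔ Commute x g := by
  rw [rconj_apply, mul_assoc, inv_mul_eq_iff_eq_mul, commute_iff_eq]

theorem rconj_of_commute {g x : G} (h : Commute x g) : rconj g x = x :=
  rconj_eq_self_iff.2 h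

theorem eq_rconj_self_iff {g x : G} : x = rconj g x ↔ Commute x g :=
  eq_comm.trans rconj_eq_self_iff

theorem eq_rconj_iff_of_commute {g x y : G} (h : Commute x g) : x = rconj g y ↔ x = y := by
  conv_lhs => rw [← rconj_of_commute h]
  exact (rconj_injective g).eq_iff

theorem cmt_inv (x g : G) : (cmt x g)⁻¹ = cmt g x := by
  simp [cmt, mul_assoc]

theorem cmt_eq_one_iff {x g : G} : cmt x g = 1 ↔ Commute x g := by
  rw [← rconj_eq_self_iff, rconj_eq_mul_cmt, mul_eq_left]

theorem cmt_eq_iff_mul_eq {x y w : G} :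
    cmt x y = w ↔ x * y = y * x * w := by
  rw [cmt, mul_assoc, mul_assoc, inv_mul_eq_iff_eq_mul, inv_mul_eq_iff_eq_mul, mul_assoc]

/-- This plays the role of the Hall–Witt identity, in a form that can be evaluated from a table of
conjugates. -/
theorem rconj_rconj (g h x : G) : rconj h (rconj g x) = rconj (cmt g h) (rconj g (rconj h x)) := by
  simp [rconj_apply, cmt, mul_assoc]

theorem commute_mul_left_iff_right {x y t : G} (hx : Commute x t) :
    Commute (x * y) t ↔ Commute y t :=
  ⟨fun h => by simpa using hx.inv_left.mul_left h, hx.mul_left⟩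

theorem commute_mul_left_iff_left {x y t : G} (hy : Commute y t) :
    Commute (x * y) t ↔ Commute x t :=
  ⟨fun h => by simpa using h.mul_left hy.inv_left, fun h => h.mul_left hy⟩

theorem commute_mul_right_iff_right {x y t : G} (hx : Commute t x) :
    Commute t (x * y) ↔ Commute t y :=
  ⟨fun h => by simpa using hx.inv_right.mul_right h, hx.mul_right⟩

theorem commute_mul_right_iff_left {x y t : G} (hy : Commute t y) :
    Commute t (x * y) ↔ Commute t x :=
  ⟨fun h => by simpa using h.mul_right hy.inv_right, fun h => h.mul_right hy⟩

end Conjugation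

section ClassThree

variable {G : Type*} [Group G]

theorem map_cmt {M : Type*} [Group M] (f : G →* M) (x y : G) :
    f (cmt x y) = cmt (f x) (f y) := by
  simp [cmt]

theorem cmt_mem_iff_commute_mk {N : Subgroup G} [N.Normal] {x y : G} :
    cmt x y ∈ N ↔ Commute (x : G ⧸ N) (y : G ⧸ N) := by
  rw [← QuotientGroup.eq_one_iff, ← cmt_eq_one_iff]
  rfl

open scoped commutatorElement in
theorem cmt_mem_iff_commutatorElement_mem {N : Subgroup G} [N.Normal] {x y : G} :
    cmt x y ∈ N ↔ ⁅x, y⁆ ∈ N := by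
  rw [cmt_mem_iff_commute_mk, ← commutatorElement_eq_one_iff_commute, ← QuotientGroup.eq_one_iff]
  rfl

theorem cmt_mem_commutator (x y : G) : cmt x y ∈ commutator G :=
  cmt_mem_iff_commutatorElement_mem.2 <|
    Subgroup.commutator_mem_commutator (Subgroup.mem_top x) (Subgroup.mem_top y)

theorem mem_upperCentralSeries_succ_iff_cmt {n : ℕ} {x : G} :
    x ∈ Subgroup.upperCentralSeries G (n + 1) ↔
      ∀ y, cmt x y ∈ Subgroup.upperCentralSeries G n := by
  simp only [Subgroup.mem_upperCentralSeries_succ_iff, cmt_mem_iff_commutatorElement_mem]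

theorem cmt_mem_of_closure_eq_top {S : Set G} (hS : Subgroup.closure S = ⊤) {N : Subgroup G}
    [N.Normal] {x : G} (h : ∀ s ∈ S, cmt x s ∈ N) (y : G) : cmt x y ∈ N := by
  have hle : Subgroup.closure S ≤
      (Subgroup.centralizer {(x : G ⧸ N)}).comap (QuotientGroup.mk' N) := by
    refine (Subgroup.closure_le _).2 fun s hs => ?_
    exact Subgroup.mem_centralizer_singleton_iff.2 (cmt_mem_iff_commute_mk.1 (h s hs)).symm.eq
  have hy : y ∈ Subgroup.closure S := hS ▸ Subgroup.mem_top y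
  exact cmt_mem_iff_commute_mk.2 (Subgroup.mem_centralizer_singleton_iff.1 (hle hy)).symm

theorem mem_upperCentralSeries_succ_of_closure_eq_top {S : Set G} (hS : Subgroup.closure S = ⊤)
    {n : ℕ} {x : G} (h : ∀ s ∈ S, cmt x s ∈ Subgroup.upperCentralSeries G n) :
    x ∈ Subgroup.upperCentralSeries G (n + 1) :=
  mem_upperCentralSeries_succ_iff_cmt.2 (cmt_mem_of_closure_eq_top hS h)

theorem commutator_le_of_closure_eq_top {S : Set G} (hS : Subgroup.closure S = ⊤)
    {N : Subgroup G} [N.Normal] (h : ∀ s ∈ S, ∀ t ∈ S, cmt s t ∈ N) : commutator G ≤ N := by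
  refine Subgroup.commutator_le.2 fun x _ y _ => cmt_mem_iff_commutatorElement_mem.1 ?_
  refine cmt_mem_of_closure_eq_top hS (fun s hs => ?_) y
  rw [← inv_mem_iff, cmt_inv]
  exact cmt_mem_of_closure_eq_top hS (h s hs) x

/-- Nilpotency of class at most three, stated as `[G, G] ≤ ζ₂(G)`. -/
def ClassAtMostThree (G : Type*) [Group G] : Prop :=
  commutator G ≤ Subgroup.upperCentralSeries G 2

namespace ClassAtMostThree

variable (hG : ClassAtMostThree G)
include hG

theorem cmt_mem_center {p : G} (hp : p ∈ commutator G) (g : G) : cmt p g ∈ Subgroup.center G := by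
  rw [← Subgroup.upperCentralSeries_one]
  exact mem_upperCentralSeries_succ_iff_cmt.1 (hG hp) g

theorem cmt_cmt_eq_one {p : G} (hp : p ∈ commutator G) (g h : G) : cmt (cmt p g) h = 1 :=
  cmt_eq_one_iff.2 (Subgroup.mem_center_iff.1 (hG.cmt_mem_center hp g) h).symm

theorem cmt_mul_left {p : G} (hp : p ∈ commutator G) (q h : G) :
    cmt (p * q) h = cmt p h * cmt q h := by
  have e : cmt (p * q) h = q⁻¹ * (cmt p h * q) * cmt q h := by simp [cmt, mul_assoc]
  rw [e, ← Subgroup.mem_center_iff.1 (hG.cmt_mem_center hp h) q, inv_mul_cancel_left]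

theorem cmt_mul_right {p : G} (hp : p ∈ commutator G) (g h : G) :
    cmt p (g * h) = cmt p g * cmt p h := by
  have e : cmt p (g * h) = cmt p h * (h⁻¹ * (cmt p g * h)) := by simp [cmt, mul_assoc]
  have hc := Subgroup.mem_center_iff.1 (hG.cmt_mem_center hp g)
  rw [e, ← hc h, inv_mul_cancel_left, hc]

theorem cmt_cmt_mul_left (x y g h : G) :
    cmt (cmt (x * y) g) h = cmt (cmt x g) h * cmt (cmt y g) h := by
  have e : cmt (x * y) g = cmt x g * (cmt (cmt x g) y * cmt y g) := by simp [cmt, mul_assoc]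
  have hx := cmt_mem_commutator x g
  rw [e, hG.cmt_mul_left hx, hG.cmt_mul_left (cmt_mem_commutator _ y), hG.cmt_cmt_eq_one hx,
    one_mul]

theorem cmt_cmt_mul_mid (x g h k : G) :
    cmt (cmt x (g * h)) k = cmt (cmt x g) k * cmt (cmt x h) k := by
  have e : cmt x (g * h) = cmt x h * (cmt x g * cmt (cmt x g) h) := by simp [cmt, mul_assoc]
  have hx := cmt_mem_commutator x g
  rw [e, hG.cmt_mul_left (cmt_mem_commutator x h), hG.cmt_mul_left hx, hG.cmt_cmt_eq_one hx,
    mul_one, Subgroup.mem_center_iff.1 (hG.cmt_mem_center hx k)]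

theorem cmt_cmt_zpow_left (x g h : G) (i : ℤ) : cmt (cmt (x ^ i) g) h = cmt (cmt x g) h ^ i :=
  map_zpow (MonoidHom.mk' (fun t => cmt (cmt t g) h) fun s t => hG.cmt_cmt_mul_left s t g h) x i

theorem cmt_cmt_pow_mid (x g h : G) (k : ℕ) : cmt (cmt x (g ^ k)) h = cmt (cmt x g) h ^ k :=
  map_pow (MonoidHom.mk' (fun t => cmt (cmt x t) h) fun s t => hG.cmt_cmt_mul_mid x s t h) g k

theorem cmt_cmt_pow_right (x g h : G) (k : ℕ) : cmt (cmt x g) (h ^ k) = cmt (cmt x g) h ^ k :=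
  map_pow (MonoidHom.mk' (cmt (cmt x g)) (hG.cmt_mul_right (cmt_mem_commutator x g))) h k

theorem exists_normal_subgroup_le_ker {M : Type*} [Group M] (hM : ClassAtMostThree M)
    {H K : Subgroup G} (f : H →* M) {x g : H} (hx : (x : G) ∈ K) (hg : (g : G) ∈ K)
    (hfx : f x ∈ commutator M) (hne : cmt (cmt (x : G) g) g ≠ 1) :
    ∃ W : Subgroup G, W ≠ ⊥ ∧ W ≤ K ∧ W.Normal ∧ W.subgroupOf H ≤ f.ker := by
  set w : H := cmt (cmt x g) g with hw
  have cmt_mem {y z : G} (hy : y ∈ K) (hz : z ∈ K) : cmt y z ∈ K :=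
    mul_mem (mul_mem (mul_mem (inv_mem hy) (inv_mem hz)) hy) hz
  have hcenter : (Subgroup.zpowers w).map H.subtype ≤ Subgroup.center G := by
    rw [MonoidHom.map_zpowers, Subgroup.zpowers_le]
    exact hG.cmt_mem_center (cmt_mem_commutator (x : G) g) g
  have hker : f w = 1 := by rw [hw, map_cmt, map_cmt, hM.cmt_cmt_eq_one hfx]
  refine ⟨(Subgroup.zpowers w).map H.subtype, ?_, ?_, ⟨fun y hy z => ?_⟩, ?_⟩
  · rwa [MonoidHom.map_zpowers, Ne, Subgroup.zpowers_eq_bot]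
  · rw [MonoidHom.map_zpowers, Subgroup.zpowers_le]
    exact cmt_mem (cmt_mem hx hg) hg
  · rwa [Subgroup.mem_center_iff.1 (hcenter hy) z, mul_inv_cancel_right]
  · rw [Subgroup.subgroupOf, Subgroup.comap_map_eq_self_of_injective H.subtype_injective,
      Subgroup.zpowers_le]
    exact hker

end ClassAtMostThree

end ClassThree

section ExponentMatrix

open scoped Matrix

theorem sum_smul_sum_smul_eq_zero_of_vecMul {R V ι κ : Type*} [CommSemiring R] [AddCommMonoid V]
    [Module R V] [Fintype ι] [Fintype κ] (t : κ → V) {N : Matrix ι κ R} {e : ι → R}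
    (he : e ᵥ* N = 0) : ∑ i, e i • ∑ j, N i j • t j = 0 := by
  simp_rw [Finset.smul_sum, smul_smul]
  rw [Finset.sum_comm]
  refine Finset.sum_eq_zero fun j _ => ?_
  rw [← Finset.sum_smul]
  exact (congrArg (· • t j) (congrFun he j)).trans (zero_smul R (t j))

theorem mem_commutator_of_vecMul_eq_zero {M : Type*} [Group M] {p q : ℕ} {t : Fin q → M}
    {y : Fin p → M} {N : Matrix (Fin p) (Fin q) ℤ}
    (hy : ∀ i, y i * (List.ofFn fun j => t j ^ N i j).prod⁻¹ ∈ commutator M)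
    {e : Fin p → ℤ} (he : e ᵥ* N = 0) :
    (List.ofFn fun i => y i ^ e i).prod ∈ commutator M := by
  have mem_iff (x : M) : x ∈ commutator M ↔ Abelianization.of x = 1 := by
    rw [← Abelianization.ker_of, MonoidHom.mem_ker]
  have hy' (i : Fin p) : Abelianization.of (y i) = ∏ j, Abelianization.of (t j) ^ N i j := by
    simpa [mem_iff, mul_inv_eq_one, map_list_prod, List.map_ofFn, List.prod_ofFn] using hy i
  rw [mem_iff, map_list_prod, List.map_ofFn, List.prod_ofFn]
  apply Additive.ofMul.injective
  simpa [hy'] using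
    sum_smul_sum_smul_eq_zero_of_vecMul (fun j => Additive.ofMul (Abelianization.of (t j))) he

end ExponentMatrix

section Unipotent

theorem eq_zero_of_zpow_pow_eq_one {G : Type*} [Group G] {u : G} (hu : ¬ IsOfFinOrder u) {n : ℕ}
    (hn : n ≠ 0) {i : ℤ} (h : (u ^ i) ^ n = 1) : i = 0 := by
  rw [← zpow_natCast, ← zpow_mul] at h
  have hin : i * n = 0 := injective_zpow_iff_not_isOfFinOrder.2 hu (h.trans (zpow_zero u).symm)
  exact (mul_eq_zero_iff_right (Nat.cast_ne_zero.2 hn)).1 hin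

variable {R : Type*} [Ring R]

/-- The unit `1 + n` attached to an element with `n³ = 0`. It is given by explicit data, so that
identities between such units can be decided by evaluation. -/
def oneAddUnit (n : R) (h : n * n * n = 0) : Rˣ where
  val := 1 + n
  inv := 1 - n + n * n
  val_inv := by
    have e : (1 + n) * (1 - n + n * n) = 1 + n * n * n := by noncomm_ring
    rw [e, h, add_zero]
  inv_val := by
    have e : (1 - n + n * n) * (1 + n) = 1 + n * n * n := by noncomm_ring
    rw [e, h, add_zero]

theorem one_add_pow_of_mul_self_eq_zero {n : R} (h : n * n = 0) (r : ℕ) :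
    (1 + n) ^ r = 1 + r • n := by
  induction r with
  | zero => simp
  | succ r ih =>
    rw [pow_succ, ih, add_mul, one_mul, smul_mul_assoc, mul_add, mul_one, h, add_zero, add_assoc,
      succ_nsmul']

theorem not_isOfFinOrder_oneAddUnit [IsAddTorsionFree R] {n : R} (hn : n ≠ 0) (h : n * n = 0)
    (h' : n * n * n = 0) : ¬ IsOfFinOrder (oneAddUnit n h') := by
  rw [isOfFinOrder_iff_pow_eq_one]
  rintro ⟨r, hr, e⟩
  have e' : (1 + n) ^ r = 1 := congrArg Units.val e
  rw [one_add_pow_of_mul_self_eq_zero h, add_eq_left, nsmul_eq_zero_iff_right hr.ne'] at e'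
  exact hn e'

instance {m n α : Type*} [AddMonoid α] [IsAddTorsionFree α] : IsAddTorsionFree (Matrix m n α) :=
  inferInstanceAs (IsAddTorsionFree (m → n → α))

end Unipotent

namespace N34

/-- The commutator `[a, b]`. -/
def ab : N34 := cmt ga gb
/-- The commutator `[a, c]`. -/
def ac : N34 := cmt ga gc
/-- The commutator `[a, d]`. -/
def ad : N34 := cmt ga gd
/-- The commutator `[b, c]`. -/
def bc : N34 := cmt gb gc
/-- The commutator `[b, d]`. -/
def bd : N34 := cmt gb gd
/-- The commutator `[c, d]`. -/
def cd : N34 := cmt gc gd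
/-- The commutator `[[a, c], b]`. -/
def acb : N34 := cmt ac gb
/-- The commutator `[[a, d], b]`. -/
def adb : N34 := cmt ad gb
/-- The commutator `[a, [a, d]]`. -/
def aad : N34 := cmt ga ad

theorem defining_relations :
    (cmt ga ab = 1 ∧ cmt ab gb = 1 ∧ cmt ad gd = 1 ∧ cmt gb bc = 1) ∧
    (cmt ga cd = 1 ∧ cmt gb cd = 1 ∧ cmt gc cd = 1 ∧ cmt cd gd = 1) ∧
    cmt bc ga = acb ∧ cmt bd ga = adb ∧ aad = cmt bc gc ∧ cmt ga ac = cmt gb bd ∧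
    acb = cmt bd gd ∧ cmt ac gc = cmt bd gc ∧ adb = cmt ad gc ∧ ab = cmt ac gc ∧
    cd = cmt ga ac := by
  have h : ∀ r ∈ N34Rels, PresentedGroup.mk N34Rels r = 1 := fun _ => PresentedGroup.one_of_mem
  simp only [N34Rels, Set.mem_insert_iff, Set.mem_singleton_iff, forall_eq_or_imp,
    forall_eq] at h
  obtain ⟨r1, r2, r3, r4, r5, r6, r7, r8, r9, r10, r11, r12, r13, r14, r15, r16, r17⟩ := h
  rw [← cmt_inv ga bc, ← cmt_inv ga bd]
  exact ⟨⟨r1, r2, r4, r5⟩, ⟨r3, r6, r7, r8⟩, mul_eq_one_iff_inv_eq.1 r9,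
    mul_eq_one_iff_inv_eq.1 r10, mul_inv_eq_one.1 r11, mul_inv_eq_one.1 r12, mul_inv_eq_one.1 r13,
    mul_inv_eq_one.1 r14, mul_inv_eq_one.1 r15, mul_inv_eq_one.1 r16, mul_inv_eq_one.1 r17⟩

theorem closure_generators : Subgroup.closure {ga, gb, gc, gd} = (⊤ : Subgroup N34) := by
  rw [← PresentedGroup.closure_range_of N34Rels]
  congr 1
  ext x
  simp [Fin.exists_fin_succ, ga, gb, gc, gd, eq_comm]

theorem mem_center_of_commute_generators {x : N34} (ha : Commute ga x) (hb : Commute gb x)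
    (hc : Commute gc x) (hd : Commute gd x) : x ∈ Subgroup.center N34 := by
  rw [← Subgroup.centralizer_univ, ← Subgroup.coe_top, ← closure_generators,
    Subgroup.centralizer_closure, Subgroup.mem_centralizer_iff]
  rintro _ (rfl | rfl | rfl | rfl)
  exacts [ha, hb, hc, hd]

@[simp] theorem cd_mem_center : cd ∈ Subgroup.center N34 := by
  obtain ⟨-, ⟨ha, hb, hc, hd⟩, -⟩ := defining_relations
  exact mem_center_of_commute_generators (cmt_eq_one_iff.1 ha) (cmt_eq_one_iff.1 hb)
    (cmt_eq_one_iff.1 hc) (cmt_eq_one_iff.1 hd).symm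

@[simp] theorem commute_cd (x : N34) : Commute x cd := Subgroup.mem_center_iff.1 cd_mem_center x
@[simp] theorem cd_commute (x : N34) : Commute cd x := (commute_cd x).symm

theorem mul_cd_inv (x : N34) : x * cd⁻¹ = cd⁻¹ * x := (commute_cd x).inv_right.eq

@[simp] theorem mul_cd_inv_mul (x y : N34) : x * (cd⁻¹ * y) = cd⁻¹ * (x * y) :=
  (commute_cd x).inv_right.left_comm y
@[simp] theorem commute_ga_ab : Commute ga ab := cmt_eq_one_iff.1 defining_relations.1.1
@[simp] theorem commute_gb_ab : Commute gb ab := (cmt_eq_one_iff.1 defining_relations.1.2.1).symm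
@[simp] theorem commute_gd_ad : Commute gd ad := (cmt_eq_one_iff.1 defining_relations.1.2.2.1).symm
@[simp] theorem commute_gb_bc : Commute gb bc := cmt_eq_one_iff.1 defining_relations.1.2.2.2

@[simp] theorem cmt_generators :
    cmt ga gb = ab ∧ cmt ga gc = ac ∧ cmt ga gd = ad ∧ cmt gb gc = bc ∧ cmt gb gd = bd ∧
      cmt gc gd = cd :=
  ⟨rfl, rfl, rfl, rfl, rfl, rfl⟩

@[simp] theorem cmt_ad_ga : cmt ad ga = aad⁻¹ := (cmt_inv ga ad).symm

@[simp] theorem rconj_generators :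
    (rconj gb ga = ga * ab ∧ rconj gc ga = ga * ac ∧ rconj gd ga = ga * ad) ∧
    (rconj ga gb = gb * ab⁻¹ ∧ rconj gc gb = gb * bc ∧ rconj gd gb = gb * bd) ∧
    (rconj ga gc = gc * ac⁻¹ ∧ rconj gb gc = gc * bc⁻¹ ∧ rconj gd gc = cd * gc) ∧
    (rconj ga gd = gd * ad⁻¹ ∧ rconj gb gd = gd * bd⁻¹ ∧ rconj gc gd = cd⁻¹ * gd) := by
  simp only [rconj_eq_mul_cmt, ← cmt_inv ga, ← cmt_inv gb gc, ← cmt_inv gb gd, ← cmt_inv gc gd,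
    cmt_generators, mul_cd_inv, (commute_cd gc).eq, and_self]

@[simp] theorem rconj_commutators :
    (rconj ga ac = cd⁻¹ * ac ∧ rconj gb ac = ac * acb ∧ rconj gc ac = ac * ab) ∧
    (rconj ga ad = ad * aad⁻¹ ∧ rconj gb ad = ad * adb ∧ rconj gc ad = ad * adb) ∧
    (rconj ga bc = bc * acb ∧ rconj gc bc = bc * aad) ∧
    (rconj ga bd = bd * adb ∧ rconj gb bd = cd⁻¹ * bd ∧ rconj gc bd = bd * ab ∧
      rconj gd bd = bd * acb) := by
  obtain ⟨-, -, hbca, hbda, hbcc, hbdb, hbdd, hbdc, hadc, hacc, haca⟩ := defining_relations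
  have hac_a : cmt ac ga = cd⁻¹ := by rw [haca, cmt_inv]
  have hbd_b : cmt bd gb = cd⁻¹ := by rw [haca, hbdb, cmt_inv]
  simp only [rconj_eq_mul_cmt, hac_a, hbd_b, hbca, hbda, ← hbcc, ← hbdd, ← hbdc, ← hadc, ← hacc,
    cmt_ad_ga, mul_cd_inv, acb, adb, and_self]

attribute [local simp] Commute.symm_iff rconj_of_commute commute_mul_left_iff_right
  commute_mul_left_iff_left commute_mul_right_iff_right commute_mul_right_iff_left
  rconj_eq_self_iff eq_rconj_self_iff eq_rconj_iff_of_commute mul_assoc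

@[simp] theorem commute_ab_ac : Commute ab ac := by
  simpa using rconj_rconj ga gc ac

@[simp] theorem commute_ab_acb : Commute ab acb := by
  simpa using commute_ab_ac.map (rconj gb)

@[simp] theorem commute_ga_acb : Commute ga acb := by
  simpa using rconj_rconj ga gb ac

theorem commute_bc_bd_mul_ab : Commute bc (bd * ab) := by
  rw [Commute.symm_iff, ← rconj_eq_self_iff]
  simpa using (rconj_rconj gb gc bd).symm

@[simp] theorem rconj_gd_bc : rconj gd bc = ab * bc :=
  mul_left_cancel (a := bd) (by simpa [commute_bc_bd_mul_ab.eq] using rconj_rconj gc gd gb)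

@[simp] theorem commute_bd_ab_mul_bc : Commute bd (ab * bc) := by
  simpa using commute_gb_bc.map (rconj gd)

@[simp] theorem commute_gd_adb : Commute gd adb := by
  simpa using commute_gd_ad.map (rconj gc)

@[simp] theorem commute_ad_bd : Commute ad bd := by
  have h : Commute ad (gd * bd) := (commute_map_iff (rconj_injective gb)).1 (by simp)
  simpa using h

@[simp] theorem commute_adb_bd : Commute adb bd := by
  simpa using commute_gd_ad.map (rconj gb)

@[simp] theorem commute_acb_ad : Commute acb ad := by
  simpa using commute_ad_bd.map (rconj gd)

theorem commute_ab_ad_mul_adb : Commute ab (ad * adb) := by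
  simpa using commute_ad_bd.map (rconj gc)

@[simp] theorem commute_ab_adb : Commute ab adb := by
  have h : Commute ab (rconj gb adb) := by
    rw [← commute_mul_right_iff_right commute_ab_ad_mul_adb]
    simpa using commute_ab_ad_mul_adb.map (rconj gb)
  rw [← commute_map_iff (rconj_injective gb)]
  simpa using h

@[simp] theorem commute_ab_ad : Commute ab ad := by
  simpa using commute_ab_ad_mul_adb

@[simp] theorem commute_acb_adb : Commute acb adb := by
  simpa using commute_adb_bd.map (rconj gd)

@[simp] theorem commute_ad_adb : Commute ad adb := by
  simpa [commute_acb_adb.eq] using rconj_rconj ga gd bd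

theorem rconj_ab_bd : rconj ab bd = bd * (rconj gb adb * adb⁻¹) := by
  rw [← mul_assoc, eq_mul_inv_iff_mul_eq]
  simpa using (rconj_rconj ga gb bd).symm

theorem rconj_ab_gd : rconj ab gd = gd * (rconj gb adb * adb⁻¹) := by
  have had : Commute (adb * ad) (rconj ab bd) := by
    simpa using (commute_adb_bd.mul_left commute_ad_bd).map (rconj ab)
  have h : rconj ab gd * (adb * ad)⁻¹ * (rconj ab bd)⁻¹ = gd * bd⁻¹ * (adb * ad)⁻¹ := by
    simpa [commute_ad_adb.symm.inv_inv.eq] using (rconj_rconj ga gb gd).symm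
  rw [mul_assoc, had.inv_inv.eq, ← mul_assoc, mul_left_inj, mul_inv_eq_iff_eq_mul, rconj_ab_bd] at h
  simpa using h

@[simp] theorem commute_gb_adb : Commute gb adb := by
  have h := rconj_comm commute_gb_ab gd
  rw [← commute_map_iff (rconj_injective gb)]
  simpa [rconj_ab_gd, rconj_ab_bd, mul_inv_eq_one] using h

@[simp] theorem commute_ab_bd : Commute ab bd := by
  rw [Commute.symm_iff, ← rconj_eq_self_iff]
  simp [rconj_ab_bd]

@[simp] theorem commute_gd_ab : Commute gd ab := by
  rw [← rconj_eq_self_iff]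
  simp [rconj_ab_gd]

@[simp] theorem commute_bc_bd : Commute bc bd := by
  simpa using commute_bd_ab_mul_bc

@[simp] theorem commute_ab_bc : Commute ab bc := by
  simpa using commute_bc_bd_mul_ab

@[simp] theorem commute_gb_acb : Commute gb acb := by
  simpa using rconj_rconj ga gb bc

@[simp] theorem commute_acb_bd : Commute acb bd := by
  simpa using rconj_rconj gb gd bd

@[simp] theorem commute_gc_acb : Commute gc acb := by
  simpa [commute_ab_acb.symm.eq] using rconj_rconj gc gd bd

@[simp] theorem commute_ac_bc : Commute ac bc := by
  have h : Commute (ac * acb) bc := by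
    rw [← rconj_eq_self_iff]
    simpa [Commute.eq] using (rconj_rconj gb gc ac).symm
  rw [← commute_map_iff (rconj_injective gb)]
  simpa using h

@[simp] theorem commute_acb_bc : Commute acb bc := by
  simpa using commute_ac_bc.map (rconj gb)

@[simp] theorem commute_ac_acb : Commute ac acb := by
  simpa using commute_ac_bc.map (rconj ga)

@[simp] theorem commute_gc_ab : Commute gc ab := by
  simpa [Commute.eq] using rconj_rconj ga gb gc

@[simp] theorem ab_mem_center : ab ∈ Subgroup.center N34 :=
  mem_center_of_commute_generators (by simp) (by simp) (by simp) (by simp)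

@[simp] theorem commute_ab (x : N34) : Commute x ab := Subgroup.mem_center_iff.1 ab_mem_center x
@[simp] theorem ab_commute (x : N34) : Commute ab x := (commute_ab x).symm

@[simp] theorem commute_aad_bd : Commute aad bd := by
  simpa using commute_bc_bd.map (rconj gc)

@[simp] theorem commute_aad_ac : Commute aad ac := by
  simpa using commute_ac_bc.map (rconj gc)

@[simp] theorem commute_aad_acb : Commute aad acb := by
  simpa using commute_acb_bc.map (rconj gc)

@[simp] theorem commute_ga_aad : Commute ga aad := by
  simpa [commute_aad_acb.eq] using rconj_rconj ga gc bc

@[simp] theorem commute_aad_adb : Commute aad adb := by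
  simpa using commute_aad_bd.map (rconj ga)

@[simp] theorem commute_aad_ad : Commute aad ad := by
  have hd : rconj gd aad = rconj ad aad := by
    simpa using rconj_rconj ga gd ad
  have ha : rconj ad (ad * ga) = ga * ad := by
    simpa using mul_rconj ad ga
  have h : Commute (rconj ad (ad * ga)) (rconj ad aad) := by
    simpa only [ha, hd, map_mul, rconj_generators] using commute_ga_aad.map (rconj gd)
  simpa using (commute_map_iff (rconj_injective ad)).1 h

@[simp] theorem commute_gd_aad : Commute gd aad := by
  simpa using rconj_rconj ga gd ad

@[simp] theorem commute_ga_rconj_gd_acb : Commute ga (rconj gd acb) := by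
  have had : Commute ad (rconj gd acb) := by simpa using commute_acb_ad.map (rconj gd)
  simpa [had] using commute_ga_acb.map (rconj gd)

@[simp] theorem commute_bc_rconj_gd_acb : Commute bc (rconj gd acb) := by
  simpa using commute_acb_bc.map (rconj gd)

@[simp] theorem commute_acb_rconj_gd_acb : Commute acb (rconj gd acb) := by
  simpa using commute_bc_rconj_gd_acb.map (rconj ga)

@[simp] theorem commute_aad_rconj_gd_acb : Commute aad (rconj gd acb) := by
  simpa using commute_aad_acb.map (rconj gd)

@[simp] theorem commute_aad_bc : Commute aad bc := by
  have had : rconj ad bc = bc * (acb⁻¹ * rconj gd acb) := by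
    rw [commute_acb_rconj_gd_acb.inv_left.eq, ← mul_assoc, eq_mul_inv_iff_mul_eq]
    simpa using (rconj_rconj ga gd bc).symm
  simpa [had, commute_acb_rconj_gd_acb.symm.eq] using rconj_rconj ad ga bc

@[simp] theorem commute_gb_aad : Commute gb aad := by
  simpa using commute_gb_bc.map (rconj gc)

@[simp] theorem commute_ga_adb : Commute ga adb := by
  simpa [commute_aad_adb.symm.inv_right.eq] using rconj_rconj ga gb ad

theorem rconj_gd_ac_eq_rconj_ad : rconj gd ac = rconj ad ac * adb := by
  apply mul_left_cancel (a := ad)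
  rw [← mul_assoc, mul_rconj, mul_assoc]
  simpa using rconj_rconj gc gd ga

@[simp] theorem commute_ac_ad : Commute ac ad := by
  have ha : rconj ga (rconj ad ac) = cd⁻¹ * rconj ad ac := by
    have h : Commute aad (rconj ad ac) := by simpa using commute_aad_ac.map (rconj ad)
    simpa [h] using rconj_rconj ad ga ac
  have h : rconj ad ac = rconj ad (rconj ad ac) := by
    simpa [rconj_gd_ac_eq_rconj_ad, ha] using rconj_rconj ga gd ac
  simpa using rconj_injective ad h

@[simp] theorem commute_ac_adb : Commute ac adb := by
  simpa using commute_ac_ad.map (rconj gb)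

@[simp] theorem rconj_gd_ac : rconj gd ac = ac * adb := by
  simp [rconj_gd_ac_eq_rconj_ad]

@[simp] theorem commute_gc_aad : Commute gc aad := by
  simpa [commute_aad_adb.inv_left.eq] using rconj_rconj ga gc ad

@[simp] theorem commute_gc_adb : Commute gc adb := by
  have h : Commute gc (bd⁻¹ * ac) := by
    rw [Commute.symm_iff, ← rconj_eq_self_iff]
    simp [(commute_ab ac).eq, (commute_ab bd⁻¹).left_comm]
  rw [← commute_mul_right_iff_right h]
  simpa using h.map (rconj gd)

@[simp] theorem commute_ac_bd : Commute ac bd := by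
  simpa [(commute_ab _).eq] using rconj_rconj ga gc bd

@[simp] theorem commute_gd_acb : Commute gd acb := by
  simpa [commute_acb_adb.eq] using rconj_rconj gb gd ac

@[simp] theorem acb_mem_center : acb ∈ Subgroup.center N34 :=
  mem_center_of_commute_generators (by simp) (by simp) (by simp) (by simp)
@[simp] theorem adb_mem_center : adb ∈ Subgroup.center N34 :=
  mem_center_of_commute_generators (by simp) (by simp) (by simp) (by simp)
@[simp] theorem aad_mem_center : aad ∈ Subgroup.center N34 :=
  mem_center_of_commute_generators (by simp) (by simp) (by simp) (by simp)

theorem cmt_commutators_mem_center {s : N34} (hs : s ∈ ({ga, gb, gc, gd} : Set N34)) :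
    cmt ac s ∈ Subgroup.center N34 ∧ cmt ad s ∈ Subgroup.center N34 ∧
      cmt bc s ∈ Subgroup.center N34 ∧ cmt bd s ∈ Subgroup.center N34 := by
  have cmt_eq (x g : N34) : cmt x g = x⁻¹ * rconj g x := by simp [rconj_eq_mul_cmt]
  rcases hs with rfl | rfl | rfl | rfl <;> simp [cmt_eq, (commute_ab bc).inv_mul_cancel_assoc]

theorem commutators_mem_upperCentralSeries :
    ac ∈ Subgroup.upperCentralSeries N34 2 ∧ ad ∈ Subgroup.upperCentralSeries N34 2 ∧
      bc ∈ Subgroup.upperCentralSeries N34 2 ∧ bd ∈ Subgroup.upperCentralSeries N34 2 := by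
  have mem {x : N34} (h : ∀ s ∈ ({ga, gb, gc, gd} : Set N34), cmt x s ∈ Subgroup.center N34) :
      x ∈ Subgroup.upperCentralSeries N34 2 :=
    mem_upperCentralSeries_succ_of_closure_eq_top closure_generators
      (by rwa [Subgroup.upperCentralSeries_one])
  exact ⟨mem fun _ hs => (cmt_commutators_mem_center hs).1,
    mem fun _ hs => (cmt_commutators_mem_center hs).2.1,
    mem fun _ hs => (cmt_commutators_mem_center hs).2.2.1,
    mem fun _ hs => (cmt_commutators_mem_center hs).2.2.2⟩

theorem classAtMostThree : ClassAtMostThree N34 := by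
  obtain ⟨hac, had, hbc, hbd⟩ := commutators_mem_upperCentralSeries
  have center_le := Subgroup.upperCentralSeries_mono N34 one_le_two
  rw [Subgroup.upperCentralSeries_one] at center_le
  have hab := center_le ab_mem_center
  have hcd := center_le cd_mem_center
  have cmt_self (x : N34) : cmt x x = 1 := by simp [cmt]
  refine commutator_le_of_closure_eq_top closure_generators fun s hs t ht => ?_
  rcases hs with rfl | rfl | rfl | rfl <;> rcases ht with rfl | rfl | rfl | rfl <;>
    first
    | simp [*]
    | rw [← inv_mem_iff, cmt_inv]; simp [*]

theorem cmt_cmt_gc (p q r t : ℤ) :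
    cmt (cmt (ga ^ p * gb ^ q * gc ^ r * gd ^ t) gc) gc = ab ^ p * aad ^ q := by
  obtain ⟨-, -, -, -, hbcc, -, -, -, -, hacc, -⟩ := defining_relations
  have ha : cmt (cmt ga gc) gc = ab := hacc.symm
  have hb : cmt (cmt gb gc) gc = aad := hbcc.symm
  have hc : cmt (cmt gc gc) gc = 1 := by simp [cmt]
  have hd : cmt (cmt gd gc) gc = 1 := by simp [← cmt_inv gc gd, cmt_eq_one_iff]
  simp only [classAtMostThree.cmt_cmt_mul_left, classAtMostThree.cmt_cmt_zpow_left, ha, hb, hc, hd,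
    one_zpow, mul_one]

theorem cmt_cmt_ga (p q r t : ℤ) :
    cmt (cmt (ga ^ p * gb ^ q * gc ^ r * gd ^ t) ga) ga = cd ^ r * aad ^ t := by
  have cmt_inv_ga (x : N34) : cmt x⁻¹ ga = x * rconj ga x⁻¹ := by simp [rconj_eq_mul_cmt]
  have ha : cmt (cmt ga ga) ga = 1 := by simp [cmt]
  have hb : cmt (cmt gb ga) ga = 1 := by simp [← cmt_inv ga gb, cmt_eq_one_iff]
  have hc : cmt (cmt gc ga) ga = cd := by simp [← cmt_inv ga gc, cmt_inv_ga]
  have hd : cmt (cmt gd ga) ga = aad := by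
    simp [← cmt_inv ga gd, cmt_inv_ga, commute_aad_ad.symm.mul_inv_cancel_assoc]
  simp only [classAtMostThree.cmt_cmt_mul_left, classAtMostThree.cmt_cmt_zpow_left, ha, hb, hc, hd,
    one_zpow, mul_one, one_mul]

section Representations

/-- A criterion for `A, B, C, D` to satisfy the relations of `N34`, in the case where `[[a, c], b]`
and `[[a, d], b]` are sent to `1`; the elements `Z, P, Q, R, T, S, V` are the images of `ab, ac, ad,
bc, bd, cd, aad`. -/
theorem exists_hom_of_cmt_eq {M : Type*} [Group M] {A B C D P Q R T S Z V : M}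
    (h₂ : cmt A B = Z ∧ cmt A C = P ∧ cmt A D = Q ∧ cmt B C = R ∧ cmt B D = T ∧ cmt C D = S)
    (hac : cmt A P = S ∧ cmt P B = 1 ∧ cmt P C = Z)
    (had : cmt A Q = V ∧ cmt Q B = 1 ∧ cmt Q C = 1 ∧ cmt Q D = 1)
    (hbc : cmt A R = 1 ∧ cmt B R = 1 ∧ cmt R C = V)
    (hbd : cmt A T = 1 ∧ cmt B T = S ∧ cmt T C = Z ∧ cmt T D = 1)
    (hab : cmt A Z = 1 ∧ cmt Z B = 1)
    (hcd : cmt A S = 1 ∧ cmt B S = 1 ∧ cmt C S = 1 ∧ cmt S D = 1) :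
    ∃ φ : N34 →* M, φ ab = Z ∧ φ cd = S ∧ φ aad = V := by
  have hrel : ∀ r ∈ N34Rels, FreeGroup.lift ![A, B, C, D] r = 1 := by
    simp only [N34Rels, Set.mem_insert_iff, Set.mem_singleton_iff, forall_eq_or_imp, forall_eq,
      map_mul, map_inv, map_cmt, FreeGroup.lift_apply_of, Matrix.cons_val, h₂, hac, had, hbc, hbd,
      hab, hcd, mul_inv_cancel, mul_one, inv_one, and_self]
  have eval (i : Fin 4) : PresentedGroup.toGroup hrel (PresentedGroup.of i) = ![A, B, C, D] i :=
    PresentedGroup.toGroup.of hrel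
  refine ⟨PresentedGroup.toGroup hrel, ?_⟩
  simp only [ab, cd, aad, ad, ga, gb, gc, gd, map_cmt, eval, Matrix.cons_val, h₂, had, and_self]

open Matrix (single)

/-- An entry `single i l 1` of a generator is an edge `i → l` labelled by that generator. The paths
`aad` and `ccb` from `0` to `5` realise the relation `[a, [a, d]] = [[b, c], c]`. -/
theorem exists_hom_not_isOfFinOrder_aad : ∃ φ : N34 →* (Matrix (Fin 6) (Fin 6) ℤ)ˣ,
    φ ab = 1 ∧ φ cd = 1 ∧ ¬ IsOfFinOrder (φ aad) := by
  obtain ⟨φ, hab, hcd, haad⟩ : ∃ φ : N34 →* (Matrix (Fin 6) (Fin 6) ℤ)ˣ,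
      φ ab = 1 ∧ φ cd = 1 ∧ φ aad = oneAddUnit (single 0 5 1) (by decide +kernel) := by
    apply exists_hom_of_cmt_eq
      (A := oneAddUnit (single 0 1 1 + single 1 2 1) (by decide +kernel))
      (B := oneAddUnit (single 4 5 1) (by decide +kernel))
      (C := oneAddUnit (single 0 3 1 + single 3 4 1) (by decide +kernel))
      (D := oneAddUnit (single 2 5 1) (by decide +kernel))
      (P := 1)
      (Q := oneAddUnit (single 0 5 (-1) + single 1 5 1) (by decide +kernel))
      (R := oneAddUnit (single 0 5 1 + single 3 5 (-1)) (by decide +kernel))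
      (T := 1)
      <;> simp only [cmt_eq_iff_mul_eq] <;> decide +kernel
  exact ⟨φ, hab, hcd, haad ▸ not_isOfFinOrder_oneAddUnit (by decide +kernel) (by simp) _⟩

/-- The paths `aac`, `bbd` and `cd` from `0` to `6` realise the relations
`[a, [a, c]] = [b, [b, d]] = [c, d]`. -/
theorem exists_hom_not_isOfFinOrder_cd : ∃ φ : N34 →* (Matrix (Fin 7) (Fin 7) ℤ)ˣ,
    φ ab = 1 ∧ φ aad = 1 ∧ ¬ IsOfFinOrder (φ cd) := by
  obtain ⟨φ, hab, hcd, haad⟩ : ∃ φ : N34 →* (Matrix (Fin 7) (Fin 7) ℤ)ˣ,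
      φ ab = 1 ∧ φ cd = oneAddUnit (single 0 6 1) (by decide +kernel) ∧ φ aad = 1 := by
    apply exists_hom_of_cmt_eq
      (A := oneAddUnit (single 0 1 1 + single 1 2 1) (by decide +kernel))
      (B := oneAddUnit (single 0 3 1 + single 3 4 1) (by decide +kernel))
      (C := oneAddUnit (single 0 5 1 + single 2 6 1) (by decide +kernel))
      (D := oneAddUnit (single 4 6 1 + single 5 6 1) (by decide +kernel))
      (P := oneAddUnit (single 0 6 (-1) + single 1 6 1) (by decide +kernel))
      (Q := 1)
      (R := 1)
      (T := oneAddUnit (single 0 6 (-1) + single 3 6 1) (by decide +kernel))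
      <;> simp only [cmt_eq_iff_mul_eq] <;> decide +kernel
  exact ⟨φ, hab, haad, hcd ▸ not_isOfFinOrder_oneAddUnit (by decide +kernel) (by simp) _⟩

/-- The paths `acc`, `bcd`, `bdc` and `ab` from `0` to `7` realise the relations
`[[a, c], c] = [[b, d], c] = [a, b]`. -/
theorem exists_hom_not_isOfFinOrder_ab : ∃ φ : N34 →* (Matrix (Fin 8) (Fin 8) ℤ)ˣ,
    φ cd = 1 ∧ φ aad = 1 ∧ ¬ IsOfFinOrder (φ ab) := by
  obtain ⟨φ, hab, hcd, haad⟩ : ∃ φ : N34 →* (Matrix (Fin 8) (Fin 8) ℤ)ˣ,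
      φ ab = oneAddUnit (single 0 7 1) (by decide +kernel) ∧ φ cd = 1 ∧ φ aad = 1 := by
    apply exists_hom_of_cmt_eq
      (A := oneAddUnit (single 0 1 1 + single 0 6 1) (by decide +kernel))
      (B := oneAddUnit (single 0 3 1 + single 6 7 1) (by decide +kernel))
      (C := oneAddUnit (single 1 2 1 + single 2 7 1 + single 3 4 1 + single 5 7 1)
        (by decide +kernel))
      (D := oneAddUnit (single 3 5 1 + single 4 7 1) (by decide +kernel))
      (P := oneAddUnit (single 0 2 1) (by decide +kernel))
      (Q := 1)
      (R := oneAddUnit (single 0 4 1) (by decide +kernel))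
      (T := oneAddUnit (single 0 5 1) (by decide +kernel))
      <;> simp only [cmt_eq_iff_mul_eq] <;> decide +kernel
  exact ⟨φ, hcd, haad, hab ▸ not_isOfFinOrder_oneAddUnit (by decide +kernel) (by simp) _⟩

theorem eq_zero_of_zpow_mul_zpow_mul_zpow_pow_eq_one {p q r : ℤ} {n : ℕ} (hn : n ≠ 0)
    (h : (ab ^ p * cd ^ q * aad ^ r) ^ n = 1) : p = 0 ∧ q = 0 ∧ r = 0 := by
  obtain ⟨φ, φcd, φaad, φab⟩ := exists_hom_not_isOfFinOrder_ab
  obtain ⟨χ, χab, χaad, χcd⟩ := exists_hom_not_isOfFinOrder_cd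
  obtain ⟨ψ, ψab, ψcd, ψaad⟩ := exists_hom_not_isOfFinOrder_aad
  refine ⟨eq_zero_of_zpow_pow_eq_one φab hn ?_, eq_zero_of_zpow_pow_eq_one χcd hn ?_,
    eq_zero_of_zpow_pow_eq_one ψaad hn ?_⟩
  · simpa [φcd, φaad] using congrArg φ h
  · simpa [χab, χaad] using congrArg χ h
  · simpa [ψab, ψcd] using congrArg ψ h

end Representations

theorem cmt_cmt_pow_ne_one {e : Fin 4 → ℤ} (he : e ≠ 0) {m n k j : ℕ} (hm : m ≠ 0) (hn : n ≠ 0)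
    (hk : k ≠ 0) (hj : j ≠ 0) {x : N34}
    (hx : x = (ga ^ m) ^ e 0 * (gb ^ n) ^ e 1 * (gc ^ k) ^ e 2 * (gd ^ j) ^ e 3) :
    cmt (cmt x (ga ^ m)) (ga ^ m) ≠ 1 ∨ cmt (cmt x (gc ^ k)) (gc ^ k) ≠ 1 := by
  have eq_zero {l : ℕ} (hl : l ≠ 0) {i : Fin 4} (h : (l : ℤ) * e i = 0) : e i = 0 :=
    (mul_eq_zero_iff_left (Nat.cast_ne_zero.2 hl)).1 h
  simp only [← zpow_natCast, ← zpow_mul] at hx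
  contrapose! he
  obtain ⟨ha, hc⟩ := he
  rw [classAtMostThree.cmt_cmt_pow_right, classAtMostThree.cmt_cmt_pow_mid, ← pow_mul, hx] at ha hc
  rw [cmt_cmt_ga] at ha
  rw [cmt_cmt_gc] at hc
  obtain ⟨-, h₂, h₃⟩ := eq_zero_of_zpow_mul_zpow_mul_zpow_pow_eq_one (p := 0)
    (mul_ne_zero hm hm) (by simpa using ha)
  obtain ⟨h₀, -, h₁⟩ := eq_zero_of_zpow_mul_zpow_mul_zpow_pow_eq_one (q := 0)
    (mul_ne_zero hk hk) (by simpa using hc)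
  ext i
  fin_cases i
  exacts [eq_zero hm h₀, eq_zero hn h₁, eq_zero hk h₂, eq_zero hj h₃]

end N34

/-- Let `f : H → N_{3,4}` be a virtual endomorphism of `G = N_{3,4}`, let
`K = ⟨aᵐ, bⁿ, cᵏ, dʲ⟩ ≤ H`, and let `Nf` be the `4 × 4` integer exponent matrix of `f`
(recording the images of `aᵐ, bⁿ, cᵏ, dʲ` modulo `G'`). If `det Nf = 0`, then there is a
nontrivial subgroup `W ≤ K`, normal in `N_{3,4}`, contained in the kernel of `f`. -/
theorem N34_kernel_witness_of_det_eq_zero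
    (H : Subgroup N34) (hH : H.FiniteIndex) (f : ↥H →* N34)
    (m n k j : ℕ) (hm : 0 < m) (hn : 0 < n) (hk : 0 < k) (hj : 0 < j)
    (ham : ga ^ m ∈ H) (hbn : gb ^ n ∈ H) (hck : gc ^ k ∈ H) (hdj : gd ^ j ∈ H)
    (K : Subgroup N34)
    (hK : K = Subgroup.closure {ga ^ m, gb ^ n, gc ^ k, gd ^ j})
    (hKH : K ≤ H)
    (Nf : Matrix (Fin 4) (Fin 4) ℤ)
    (hfa : f ⟨ga ^ m, ham⟩ *
      (ga ^ Nf 0 0 * gb ^ Nf 0 1 * gc ^ Nf 0 2 * gd ^ Nf 0 3)⁻¹ ∈ commutator N34)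
    (hfb : f ⟨gb ^ n, hbn⟩ *
      (ga ^ Nf 1 0 * gb ^ Nf 1 1 * gc ^ Nf 1 2 * gd ^ Nf 1 3)⁻¹ ∈ commutator N34)
    (hfc : f ⟨gc ^ k, hck⟩ *
      (ga ^ Nf 2 0 * gb ^ Nf 2 1 * gc ^ Nf 2 2 * gd ^ Nf 2 3)⁻¹ ∈ commutator N34)
    (hfd : f ⟨gd ^ j, hdj⟩ *
      (ga ^ Nf 3 0 * gb ^ Nf 3 1 * gc ^ Nf 3 2 * gd ^ Nf 3 3)⁻¹ ∈ commutator N34)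
    (hdet : Nf.det = 0) :
    ∃ W : Subgroup N34, W ≠ ⊥ ∧ W ≤ K ∧ W.Normal ∧ W.subgroupOf H ≤ f.ker := by
  let h : Fin 4 → H := ![⟨ga ^ m, ham⟩, ⟨gb ^ n, hbn⟩, ⟨gc ^ k, hck⟩, ⟨gd ^ j, hdj⟩]
  have hhK (i : Fin 4) : (h i : N34) ∈ K := by
    subst hK
    fin_cases i <;> exact Subgroup.subset_closure (by simp [h])
  have hNf (i : Fin 4) :
      f (h i) * (List.ofFn fun l => ![ga, gb, gc, gd] l ^ Nf i l).prod⁻¹ ∈ commutator N34 := by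
    fin_cases i
    exacts [by simpa [h, mul_assoc] using hfa, by simpa [h, mul_assoc] using hfb,
      by simpa [h, mul_assoc] using hfc, by simpa [h, mul_assoc] using hfd]
  obtain ⟨e, he, heNf⟩ := Matrix.exists_vecMul_eq_zero_iff.2 hdet
  let x : H := (List.ofFn fun i => h i ^ e i).prod
  have hxK : x ∈ K.subgroupOf H :=
    Subgroup.list_prod_mem _ (List.forall_mem_ofFn_iff.2 fun i => zpow_mem (hhK i) (e i))
  have hfx : f x ∈ commutator N34 := by
    simpa [x, map_list_prod, List.map_ofFn] using mem_commutator_of_vecMul_eq_zero hNf heNf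
  have hx : (x : N34) =
      (ga ^ m) ^ e 0 * (gb ^ n) ^ e 1 * (gc ^ k) ^ e 2 * (gd ^ j) ^ e 3 := by
    simp [x, h, mul_assoc]
  obtain ha | hc := N34.cmt_cmt_pow_ne_one he hm.ne' hn.ne' hk.ne' hj.ne' hx
  · exact N34.classAtMostThree.exists_normal_subgroup_le_ker N34.classAtMostThree f hxK (hhK 0)
      hfx ha
  · exact N34.classAtMostThree.exists_normal_subgroup_le_ker N34.classAtMostThree f hxK (hhK 2)
      hfx hc
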